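/- Irreducibility of the tensor product, case κ = n−1: let (ε₁,…,ε_n) = (1^{n−1},0) and l, m ∈ ℕ. Over the field ℂ(q)(x,y) with x, y independent indeterminates, the only subspaces of 𝒲_l⊗𝒲_m invariant under all the operators Δ(e_i), Δ(f_i), Δ(k_i^{±1}) (i ∈ ℤ/nℤ) are {0} and 𝒲_l⊗𝒲_m. -/

import Mathlib

/-!
The idea is to specialize at `y = 0`. Let `U` be a nonzero invariant subspace over `F(y)`, with
`F = ℂ(x)`. The values at `y = 0` of the vectors of `U` with polynomial coordinates form a subspace
`U₀` over `F` (`redAt0`). It is nonzero (clear denominators and divide by a power of `y`), and if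
it is all of `𝒲_l ⊗ 𝒲_m`, so is `U`, because a determinant that is nonzero at `y = 0` is nonzero
(`mem_of_redAt0`). The subspace `U₀` is stable under the generators with `r ≠ 0`, which do not
involve `y`, and under the values at `y = 0` of `Δ(e₀)` and `y Δ(f₀)`, which are `x e₀ ⊗ k₀` and
`k₀⁻¹ ⊗ f₀`: the former acts on the left factor only, the latter on the right factor only.

This makes the specialized problem easy (`limit_irred`). Number the sites from `0`, the last being
bosonic; every generator is a hop of one particle between cyclically adjacent sites.

* The operator `(k₀⁻¹ ⊗ f₀) Δ(f₁) ⋯ Δ(f_i)` removes a particle from site `i` of the right factor of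
  any basis vector whose right factor is empty before `i` (`exists_clear`), so for
  `i = 0, 1, …` one obtains a nonzero vector of `U₀` whose right factors are all the vacuum, that is,
  have all their particles at the bosonic site.
* On such vectors `Δ(e_r)`, `r ≠ 0`, acts on the left factor only, and moves its particles to
  the bosonic site: `U₀` contains vacuum `⊗` vacuum.
* With `e₀ ⊗ k₀` and the `Δ(e_r)` one reinserts particles: `U₀` contains `s ⊗` vacuum for all `s`.
* If `s` is annihilated by all `f_r` with `r ≠ 0`, then `Δ(f_r)` acts on `s ⊗ t` through `t` only, so
  `s ⊗ t ∈ U₀` for all `t`.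
* If `s ⊗ t ∈ U₀` for all `t`, then subtracting the term `s ⊗ e_r t` from `Δ(e_r)(s ⊗ t)` shows
  that the same holds for `e_r s`; in this way every `s` is reached.

The coefficients of these hops are nonzero because `q` is not a root of unity.
-/

open scoped BigOperators

set_option synthInstance.maxHeartbeats 1000000
set_option maxHeartbeats 1000000

noncomputable section

namespace TetraGQ

/-! ## Scalar ingredients -/

/-- `(a;qb)_m = ∏_{k=0}^{m-1} (1 - a qb^k)`. -/
def poch (qb a : ℂ) (m : ℕ) : ℂ := ∏ k ∈ Finset.range m, (1 - a * qb ^ k)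

/-- The `q`-binomial `binom(m,k)_qb`, zero unless `k ≤ m`. -/
def qbinom (qb : ℂ) (m k : ℕ) : ℂ :=
  if k ≤ m then poch qb qb m / (poch qb qb k * poch qb qb (m - k)) else 0

/-- `[m] = (q^m - q^{-m})/(q - q^{-1})`. -/
def qnum (q : ℂ) (m : ℕ) : ℂ := (q ^ m - q⁻¹ ^ m) / (q - q⁻¹)

/-- `[m]! = ∏_{k=1}^m [k]`. -/
def qfac (q : ℂ) (m : ℕ) : ℂ := ∏ k ∈ Finset.range m, qnum q (k + 1)

/-- The symmetric `q`-binomial `[m choose k]`, zero unless `k ≤ m`. -/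
def qbin (q : ℂ) (m k : ℕ) : ℂ :=
  if k ≤ m then qfac q m / (qfac q k * qfac q (m - k)) else 0

/-- The 3D `R` matrix entry `R^{a,b,c}_{i,j,k}`. -/
def R3 (q : ℂ) (a b c i j k : ℕ) : ℂ :=
  (if a + b = i + j ∧ b + c = j + k then (1 : ℂ) else 0) *
    ∑ lam ∈ Finset.range (b + 1),
      (-1 : ℂ) ^ lam *
        q ^ ((i : ℤ) * ((c : ℤ) - (j : ℤ)) + ((k : ℤ) + 1) * (lam : ℤ) +
            ((b : ℤ) - (lam : ℤ)) * ((b : ℤ) - (lam : ℤ) - (k : ℤ))) *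
        (poch (q ^ 2) (q ^ 2) (c + (b - lam)) / poch (q ^ 2) (q ^ 2) c) *
        qbinom (q ^ 2) i (b - lam) * qbinom (q ^ 2) j lam

/-- The 3D `L` matrix entry `L^{a,b,c}_{i,j,k}`. -/
def L3 (q : ℂ) (a b c i j k : ℕ) : ℂ :=
  if a = 0 ∧ b = 0 ∧ i = 0 ∧ j = 0 ∧ c = k then 1
  else if a = 1 ∧ b = 1 ∧ i = 1 ∧ j = 1 ∧ c = k then 1
  else if a = 0 ∧ b = 1 ∧ i = 0 ∧ j = 1 ∧ c = k then -q ^ (k + 1)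
  else if a = 1 ∧ b = 0 ∧ i = 1 ∧ j = 0 ∧ c = k then q ^ k
  else if a = 0 ∧ b = 1 ∧ i = 1 ∧ j = 0 ∧ c + 1 = k then 1 - q ^ (2 * k)
  else if a = 1 ∧ b = 0 ∧ i = 0 ∧ j = 1 ∧ c = k + 1 then 1
  else 0

/-- `S^(0) = R`, `S^(1) = L`. -/
def Sg (q : ℂ) (e : Bool) (a b c i j k : ℕ) : ℂ :=
  if e then L3 q a b c i j k else R3 q a b c i j k

/-- Coefficient of `z^{c0}` in the trace solution matrix element
`S₀(z)^{a,b}_{i,j}`. -/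
def trCoef (q : ℂ) {n : ℕ} [NeZero n] (ε : Fin n → Bool) (a b i j : Fin n → ℕ)
    (c0 : ℕ) : ℂ :=
  ∑ᶠ c : Fin n → ℕ,
    if c 0 = c0 then
      ∏ t : Fin n, Sg q (ε t) (a t) (b t) (c t) (i t) (j t) (c (t + 1))
    else 0

/-- Coefficient of `z^{c0}` in the boundary solution matrix element
`S₀^{1,1}(z)^{a,b}_{i,j}`. -/
def bdCoef (q : ℂ) {n : ℕ} (ε : Fin n → Bool) (a b i j : Fin n → ℕ) (c0 : ℕ) : ℂ :=
  ∑ᶠ c : Fin (n + 1) → ℕ,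
    if c 0 = c0 then
      poch (q ^ 2) (q ^ 2) c0 / (poch q q c0 * poch q q (c (Fin.last n))) *
        ∏ t : Fin n, Sg q (ε t) (a t) (b t) (c t.castSucc) (i t) (j t) (c t.succ)
    else 0

/-- Coefficient of `z^{c0}` in the boundary solution matrix element
`S₀^{s,t}(z)^{a,b}_{i,j}`. -/
def bdCoefST (q : ℂ) (s t : ℕ) {n : ℕ} (ε : Fin n → Bool) (a b i j : Fin n → ℕ)
    (c0 : ℕ) : ℂ :=
  ∑ᶠ c : Fin (n + 1) → ℕ,
    if c 0 = c0 then
      poch (q ^ 2) (q ^ 2) (s * c0) /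
          (poch (q ^ s ^ 2) (q ^ s ^ 2) c0 * poch (q ^ t ^ 2) (q ^ t ^ 2) (c (Fin.last n))) *
        ∏ u : Fin n,
          Sg q (ε u) (a u) (b u)
            (if u.castSucc = 0 then s * c0 else c u.castSucc) (i u) (j u)
            (if u.succ = Fin.last n then t * c (Fin.last n) else c u.succ)
    else 0

/-! ## The spaces `𝒲` and `𝒲⊗𝒲` -/

/-- `m` is an admissible occupation vector: at positions with `ε = 1` the entry is `≤ 1`. -/
def Ok {n : ℕ} (ε : Fin n → Bool) (m : Fin n → ℕ) : Prop := ∀ t, ε t = true → m t ≤ 1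

instance {n : ℕ} (ε : Fin n → Bool) : DecidablePred (Ok ε) := fun m =>
  decidable_of_iff (∀ t, ε t = true → m t ≤ 1) Iff.rfl

/-- Basis labels of `𝒲`. -/
def Idx {n : ℕ} (ε : Fin n → Bool) : Type := {m : Fin n → ℕ // Ok ε m}

/-- The space `𝒲` with basis `|m⟩`, over the field `L`. -/
abbrev W (L : Type) [Field L] {n : ℕ} (ε : Fin n → Bool) : Type := Idx ε →₀ L

/-- The space `𝒲 ⊗ 𝒲` with basis `|a⟩⊗|b⟩`, over the field `L`. -/
abbrev WW (L : Type) [Field L] {n : ℕ} (ε : Fin n → Bool) : Type := (Idx ε × Idx ε) →₀ L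

/-- The ket `|m⟩ ∈ 𝒲`; it is `0` if any coordinate is out of range. -/
def ket (L : Type) [Field L] {n : ℕ} (ε : Fin n → Bool) (m : Fin n → ℤ) : W L ε :=
  if h : (∀ t, 0 ≤ m t) ∧ Ok ε (fun t => (m t).toNat) then
    Finsupp.single ⟨fun t => (m t).toNat, h.2⟩ 1
  else 0

/-- The ket `|a⟩⊗|b⟩ ∈ 𝒲⊗𝒲`; it is `0` if any coordinate is out of range. -/
def kk (L : Type) [Field L] {n : ℕ} (ε : Fin n → Bool) (a b : Fin n → ℤ) : WW L ε :=
  if h : ((∀ t, 0 ≤ a t) ∧ Ok ε (fun t => (a t).toNat)) ∧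
      ((∀ t, 0 ≤ b t) ∧ Ok ε (fun t => (b t).toNat)) then
    Finsupp.single (⟨fun t => (a t).toNat, h.1.2⟩, ⟨fun t => (b t).toNat, h.2.2⟩) 1
  else 0

/-- The linear endomorphism of a free module determined by images of basis vectors. -/
def mkEnd (L : Type) [Field L] {α : Type} (v : α → (α →₀ L)) :
    (α →₀ L) →ₗ[L] (α →₀ L) :=
  Finsupp.lsum L fun m => LinearMap.toSpanSingleton L (α →₀ L) (v m)

/-- Product of vectors of `𝒲`, landing in `𝒲⊗𝒲`. -/
def tens (L : Type) [Field L] {n : ℕ} {ε : Fin n → Bool} (u v : W L ε) : WW L ε :=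
  u.sum fun a ca => v.sum fun b cb => Finsupp.single (a, b) (ca * cb)

/-- The operator `A ⊗ B` on `𝒲⊗𝒲`. -/
def opT (L : Type) [Field L] {n : ℕ} {ε : Fin n → Bool}
    (A B : W L ε →ₗ[L] W L ε) : WW L ε →ₗ[L] WW L ε :=
  mkEnd L fun mm => tens L (A (Finsupp.single mm.1 1)) (B (Finsupp.single mm.2 1))

/-- The subspace `𝒲_l ⊗ 𝒲_m` of `𝒲⊗𝒲`. -/
def WWlm (L : Type) [Field L] {n : ℕ} (ε : Fin n → Bool) (l m : ℕ) :
    Submodule L (WW L ε) :=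
  Submodule.span L {v | ∃ p : Idx ε × Idx ε,
    (∑ t, p.1.1 t) = l ∧ (∑ t, p.2.1 t) = m ∧ v = Finsupp.single p 1}

/-- The subspace `𝒲_l` of `𝒲`. -/
def Wl (L : Type) [Field L] {n : ℕ} (ε : Fin n → Bool) (l : ℕ) : Submodule L (W L ε) :=
  Submodule.span L {v | ∃ p : Idx ε, (∑ t, p.1 t) = l ∧ v = Finsupp.single p 1}

/-! ## The scalar field of formal Laurent series in `z` over `ℂ` -/

abbrev K : Type := LaurentSeries ℂ

/-- The power series `Σ_{c≥0} f(c) z^c` as an element of `K`. -/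
def mkS (f : ℕ → ℂ) : K := HahnSeries.ofPowerSeries ℤ ℂ (PowerSeries.mk f)

/-- Constants `ℂ → K`. -/
def cK : ℂ →+* K := HahnSeries.C

/-- The variable `z ∈ K`. -/
def zK : K := mkS fun c => if c = 1 then 1 else 0

/-! ## The solutions of the Yang-Baxter equation -/

/-- The unnormalized trace solution `S₀(z)` acting on `𝒲⊗𝒲`. -/
def S0tr (q : ℂ) {n : ℕ} [NeZero n] (ε : Fin n → Bool) : WW K ε →ₗ[K] WW K ε :=
  mkEnd K fun ij =>
    ∑ a ∈ Fintype.piFinset (fun t => Finset.range (ij.1.1 t + ij.2.1 t + 1)),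
      mkS (trCoef q ε a (fun t => ij.1.1 t + ij.2.1 t - a t) ij.1.1 ij.2.1) •
        kk K ε (fun t => (a t : ℤ)) (fun t => (ij.1.1 t : ℤ) + (ij.2.1 t : ℤ) - (a t : ℤ))

/-- The unnormalized boundary solution `S₀^{1,1}(z)` acting on `𝒲⊗𝒲`. -/
def S0bd (q : ℂ) {n : ℕ} (ε : Fin n → Bool) : WW K ε →ₗ[K] WW K ε :=
  mkEnd K fun ij =>
    ∑ a ∈ Fintype.piFinset (fun t => Finset.range (ij.1.1 t + ij.2.1 t + 1)),
      mkS (bdCoef q ε a (fun t => ij.1.1 t + ij.2.1 t - a t) ij.1.1 ij.2.1) •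
        kk K ε (fun t => (a t : ℤ)) (fun t => (ij.1.1 t : ℤ) + (ij.2.1 t : ℤ) - (a t : ℤ))

/-- The unnormalized boundary solution `S₀^{s,t}(z)` acting on `𝒲⊗𝒲`. -/
def S0bdST (q : ℂ) (s t : ℕ) {n : ℕ} (ε : Fin n → Bool) : WW K ε →ₗ[K] WW K ε :=
  mkEnd K fun ij =>
    ∑ a ∈ Fintype.piFinset (fun u => Finset.range (ij.1.1 u + ij.2.1 u + 1)),
      mkS (bdCoefST q s t ε a (fun u => ij.1.1 u + ij.2.1 u - a u) ij.1.1 ij.2.1) •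
        kk K ε (fun u => (a u : ℤ)) (fun u => (ij.1.1 u : ℤ) + (ij.2.1 u : ℤ) - (a u : ℤ))

/-- The diagonal gauge operator; `Kdiag pc ε s |m⟩ = pc^{s·(m₁+⋯+m_n)} |m⟩`
(`s = -1` gives `K`, `s = 1` gives `K⁻¹`). -/
def Kdiag (pc : ℂ) {n : ℕ} (ε : Fin n → Bool) (s : ℤ) : W K ε →ₗ[K] W K ε :=
  mkEnd K fun m => cK (pc ^ (s * ∑ t, (m.1 t : ℤ))) • Finsupp.single m 1

/-- The gauge transformed boundary solution `S̃₀^{1,1}(z) = (K⊗1) S₀^{1,1}(z) (1⊗K⁻¹)`. -/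
def S0bdT (q pc : ℂ) {n : ℕ} (ε : Fin n → Bool) : WW K ε →ₗ[K] WW K ε :=
  opT K (Kdiag pc ε (-1)) LinearMap.id ∘ₗ S0bd q ε ∘ₗ opT K LinearMap.id (Kdiag pc ε 1)

/-! ## The generalized quantum group actions -/

/-- Value of an occupation vector at a natural-number position. -/
def av {n : ℕ} (m : Fin n → ℕ) (p : ℕ) : ℕ := if h : p < n then m ⟨p, h⟩ else 0

/-- Unit coordinate vector at a natural-number position. -/
def dlt {n : ℕ} (p : ℕ) : Fin n → ℤ := fun t => if (t : ℕ) = p then 1 else 0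

/-- `q_i = q` if `ε_i = 0` and `-q⁻¹` if `ε_i = 1` (0-based positions). -/
def qc (q : ℂ) {n : ℕ} (ε : Fin n → Bool) (p : ℕ) : ℂ :=
  if h : p < n then (if ε ⟨p, h⟩ then -q⁻¹ else q) else q

/-- Type A generator `e_r` of the action `π_x`. -/
def eA (q : ℂ) {L : Type} [Field L] (ι : ℂ →+* L) {n : ℕ} (ε : Fin n → Bool) (x : L)
    (r : Fin n) : W L ε →ₗ[L] W L ε :=
  mkEnd L fun m =>
    (x ^ (if (r : ℕ) = 0 then 1 else 0) * ι (qnum q (av m.1 (((r : ℕ) + n - 1) % n)))) •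
      ket L ε fun t => (m.1 t : ℤ) - dlt (((r : ℕ) + n - 1) % n) t + dlt (r : ℕ) t

/-- Type A generator `f_r` of the action `π_x`. -/
def fA (q : ℂ) {L : Type} [Field L] (ι : ℂ →+* L) {n : ℕ} (ε : Fin n → Bool) (x : L)
    (r : Fin n) : W L ε →ₗ[L] W L ε :=
  mkEnd L fun m =>
    (x ^ (if (r : ℕ) = 0 then (-1 : ℤ) else 0) * ι (qnum q (av m.1 (r : ℕ)))) •
      ket L ε fun t => (m.1 t : ℤ) + dlt (((r : ℕ) + n - 1) % n) t - dlt (r : ℕ) t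

/-- Type A generator `k_r^{s}` (`s = ±1`) of the action `π_x`. -/
def kA (q : ℂ) {L : Type} [Field L] (ι : ℂ →+* L) {n : ℕ} (ε : Fin n → Bool) (s : ℤ)
    (r : Fin n) : W L ε →ₗ[L] W L ε :=
  mkEnd L fun m =>
    ι ((qc q ε (((r : ℕ) + n - 1) % n) ^ (-(av m.1 (((r : ℕ) + n - 1) % n) : ℤ)) *
        qc q ε (r : ℕ) ^ (av m.1 (r : ℕ) : ℤ)) ^ s) • Finsupp.single m 1

/-- Type B generator `e_r` of the action `π_x`. -/
def eB (q : ℂ) {L : Type} [Field L] (ι : ℂ →+* L) {n : ℕ} (ε : Fin n → Bool) (x : L)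
    (r : Fin (n + 1)) : W L ε →ₗ[L] W L ε :=
  mkEnd L fun m =>
    if (r : ℕ) = 0 then x • ket L ε (fun t => (m.1 t : ℤ) + dlt 0 t)
    else if (r : ℕ) = n then
      ι (qnum q (av m.1 (n - 1))) • ket L ε (fun t => (m.1 t : ℤ) - dlt (n - 1) t)
    else
      ι (qnum q (av m.1 ((r : ℕ) - 1))) •
        ket L ε (fun t => (m.1 t : ℤ) - dlt ((r : ℕ) - 1) t + dlt (r : ℕ) t)

/-- Type B generator `f_r` of the action `π_x`. -/
def fB (q : ℂ) {L : Type} [Field L] (ι : ℂ →+* L) {n : ℕ} (ε : Fin n → Bool) (x : L)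
    (r : Fin (n + 1)) : W L ε →ₗ[L] W L ε :=
  mkEnd L fun m =>
    if (r : ℕ) = 0 then
      (x⁻¹ * ι (qnum q (av m.1 0))) • ket L ε (fun t => (m.1 t : ℤ) - dlt 0 t)
    else if (r : ℕ) = n then ket L ε (fun t => (m.1 t : ℤ) + dlt (n - 1) t)
    else
      ι (qnum q (av m.1 (r : ℕ))) •
        ket L ε (fun t => (m.1 t : ℤ) + dlt ((r : ℕ) - 1) t - dlt (r : ℕ) t)

/-- Type B generator `k_r^{s}` (`s = ±1`) of the action `π_x`; `pc = i q^{-1/2}`. -/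
def kB (q pc : ℂ) {L : Type} [Field L] (ι : ℂ →+* L) {n : ℕ} (ε : Fin n → Bool) (s : ℤ)
    (r : Fin (n + 1)) : W L ε →ₗ[L] W L ε :=
  mkEnd L fun m =>
    ι ((if (r : ℕ) = 0 then pc⁻¹ * qc q ε 0 ^ (av m.1 0 : ℤ)
        else if (r : ℕ) = n then pc * qc q ε (n - 1) ^ (-(av m.1 (n - 1) : ℤ))
        else qc q ε ((r : ℕ) - 1) ^ (-(av m.1 ((r : ℕ) - 1) : ℤ)) *
          qc q ε (r : ℕ) ^ (av m.1 (r : ℕ) : ℤ)) ^ s) • Finsupp.single m 1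

/-! ## Coproduct actions on `𝒲⊗𝒲` (type A) -/

/-- `Δ(e_r) = 1⊗e_r + e_r⊗k_r`, with `π_x` on the first factor, `π_y` on the second. -/
def dE (q : ℂ) {L : Type} [Field L] (ι : ℂ →+* L) {n : ℕ} (ε : Fin n → Bool) (x y : L)
    (r : Fin n) : WW L ε →ₗ[L] WW L ε :=
  opT L LinearMap.id (eA q ι ε y r) + opT L (eA q ι ε x r) (kA q ι ε 1 r)

/-- `Δ'(e_r) = e_r⊗1 + k_r⊗e_r`. -/
def dE' (q : ℂ) {L : Type} [Field L] (ι : ℂ →+* L) {n : ℕ} (ε : Fin n → Bool) (x y : L)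
    (r : Fin n) : WW L ε →ₗ[L] WW L ε :=
  opT L (eA q ι ε x r) LinearMap.id + opT L (kA q ι ε 1 r) (eA q ι ε y r)

/-- `Δ(f_r) = f_r⊗1 + k_r⁻¹⊗f_r`. -/
def dF (q : ℂ) {L : Type} [Field L] (ι : ℂ →+* L) {n : ℕ} (ε : Fin n → Bool) (x y : L)
    (r : Fin n) : WW L ε →ₗ[L] WW L ε :=
  opT L (fA q ι ε x r) LinearMap.id + opT L (kA q ι ε (-1) r) (fA q ι ε y r)

/-- `Δ'(f_r) = 1⊗f_r + f_r⊗k_r⁻¹`. -/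
def dF' (q : ℂ) {L : Type} [Field L] (ι : ℂ →+* L) {n : ℕ} (ε : Fin n → Bool) (x y : L)
    (r : Fin n) : WW L ε →ₗ[L] WW L ε :=
  opT L LinearMap.id (fA q ι ε y r) + opT L (fA q ι ε x r) (kA q ι ε (-1) r)

/-- `Δ(k_r^s) = Δ'(k_r^s) = k_r^s ⊗ k_r^s`. -/
def dK (q : ℂ) {L : Type} [Field L] (ι : ℂ →+* L) {n : ℕ} (ε : Fin n → Bool) (s : ℤ)
    (r : Fin n) : WW L ε →ₗ[L] WW L ε :=
  opT L (kA q ι ε s r) (kA q ι ε s r)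

/-! ## Coproduct actions on `𝒲⊗𝒲` (type B) -/

def dEB (q pc : ℂ) {L : Type} [Field L] (ι : ℂ →+* L) {n : ℕ} (ε : Fin n → Bool) (x y : L)
    (r : Fin (n + 1)) : WW L ε →ₗ[L] WW L ε :=
  opT L LinearMap.id (eB q ι ε y r) + opT L (eB q ι ε x r) (kB q pc ι ε 1 r)

def dEB' (q pc : ℂ) {L : Type} [Field L] (ι : ℂ →+* L) {n : ℕ} (ε : Fin n → Bool) (x y : L)
    (r : Fin (n + 1)) : WW L ε →ₗ[L] WW L ε :=
  opT L (eB q ι ε x r) LinearMap.id + opT L (kB q pc ι ε 1 r) (eB q ι ε y r)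

def dFB (q pc : ℂ) {L : Type} [Field L] (ι : ℂ →+* L) {n : ℕ} (ε : Fin n → Bool) (x y : L)
    (r : Fin (n + 1)) : WW L ε →ₗ[L] WW L ε :=
  opT L (fB q ι ε x r) LinearMap.id + opT L (kB q pc ι ε (-1) r) (fB q ι ε y r)

def dFB' (q pc : ℂ) {L : Type} [Field L] (ι : ℂ →+* L) {n : ℕ} (ε : Fin n → Bool) (x y : L)
    (r : Fin (n + 1)) : WW L ε →ₗ[L] WW L ε :=
  opT L LinearMap.id (fB q ι ε y r) + opT L (fB q ι ε x r) (kB q pc ι ε (-1) r)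

def dKB (q pc : ℂ) {L : Type} [Field L] (ι : ℂ →+* L) {n : ℕ} (ε : Fin n → Bool) (s : ℤ)
    (r : Fin (n + 1)) : WW L ε →ₗ[L] WW L ε :=
  opT L (kB q pc ι ε s r) (kB q pc ι ε s r)

/-! ## Structure constants -/

/-- Type A structure constant `D_{i,j}` (as a product over 0-based positions). -/
def DA (q : ℂ) {n : ℕ} (ε : Fin n → Bool) (i j : Fin n) : ℂ :=
  ∏ p ∈ (({((i : ℕ) + n - 1) % n, (i : ℕ)} : Finset ℕ) ∩
      ({((j : ℕ) + n - 1) % n, (j : ℕ)} : Finset ℕ)),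
    qc q ε p ^ (if i = j then (1 : ℤ) else -1)

/-- The set `⟨i⟩ = {i, i+1} ∩ [1,n]` of type B, translated to 0-based positions. -/
def nodeB (n i : ℕ) : Finset ℕ :=
  if i = 0 then {0} else if i = n then {n - 1} else {i - 1, i}

/-- Type B structure constant `D_{i,j}`. -/
def DB (q : ℂ) {n : ℕ} (ε : Fin n → Bool) (i j : Fin (n + 1)) : ℂ :=
  ∏ p ∈ nodeB n (i : ℕ) ∩ nodeB n (j : ℕ), qc q ε p ^ (if i = j then (1 : ℤ) else -1)

/-! ## Distinguished vectors -/

/-- The vector `J_{n,j} = Σ_{i, Σi=j} q^{inv(i)} |i⟩⊗|1-i⟩`. -/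
def Jfull (q : ℂ) {L : Type} [Field L] (ι : ℂ →+* L) {n : ℕ} (ε : Fin n → Bool)
    (j : ℕ) : WW L ε :=
  ∑ i ∈ Fintype.piFinset (fun _ : Fin n => Finset.range 2),
    (if (∑ t, i t) = j then
        ι (q ^ (∑ s : Fin n, ∑ t : Fin n, if s < t then i s * (1 - i t) else 0))
      else 0) •
      kk L ε (fun t => (i t : ℤ)) (fun t => 1 - (i t : ℤ))

/-- Extension of a `Fin s`-tuple to `ℕ` by zero. -/
def ivf {s : ℕ} (i : Fin s → ℕ) : ℕ → ℕ := fun p => if h : p < s then i ⟨p, h⟩ else 0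

/-- `inv(i₁,…,i_s) = Σ_{p<r} i_p (1 - i_r)`. -/
def invv (s : ℕ) (iv : ℕ → ℕ) : ℕ :=
  ∑ p ∈ Finset.range s, ∑ r ∈ Finset.range s, if p < r then iv p * (1 - iv r) else 0

/-- Occupation vector `(0^{nn-s-t}, i₁,…,i_s, 1^t)`. -/
def winA (nn s t : ℕ) (iv : ℕ → ℕ) : Fin nn → ℤ := fun u =>
  if (u : ℕ) < nn - s - t then 0
  else if (u : ℕ) < nn - t then (iv ((u : ℕ) - (nn - s - t)) : ℤ)
  else 1

/-- The singular vector `ξ_t^{l,m}` for `κ = n`. -/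
def xiA (q : ℂ) {L : Type} [Field L] (ι : ℂ →+* L) {n : ℕ} (ε : Fin n → Bool)
    (l m t : ℕ) : WW L ε :=
  ∑ i ∈ Fintype.piFinset (fun _ : Fin (l + m - 2 * t) => Finset.range 2),
    (if (∑ u, i u) = l - t then ι (q ^ invv (l + m - 2 * t) (ivf i)) else 0) •
      kk L ε (winA n (l + m - 2 * t) t (ivf i))
        (winA n (l + m - 2 * t) t (fun p => 1 - ivf i p))

/-- Occupation vector `(0^{nn-s-1}, i₁,…,i_s, last)`. -/
def winA1 (nn s : ℕ) (iv : ℕ → ℕ) (last : ℤ) : Fin nn → ℤ := fun u =>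
  if (u : ℕ) < nn - s - 1 then 0
  else if (u : ℕ) < nn - 1 then (iv ((u : ℕ) - (nn - s - 1)) : ℤ)
  else last

/-- The singular vector `ξ_s^{l,m}` for `κ = n-1`. -/
def xiA1 (q : ℂ) {L : Type} [Field L] (ι : ℂ →+* L) {n : ℕ} (ε : Fin n → Bool)
    (l m s : ℕ) : WW L ε :=
  ∑ j ∈ Finset.range (s + 1),
    ∑ i ∈ Fintype.piFinset (fun _ : Fin s => Finset.range 2),
      (if (∑ u, i u) = s - j then
          ι ((-1 : ℂ) ^ j * q ^ (j * (m - s + 1)) * q ^ invv s (ivf i))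
        else 0) •
        kk L ε (winA1 n s (ivf i) ((l : ℤ) + (j : ℤ) - (s : ℤ)))
          (winA1 n s (fun p => 1 - ivf i p) ((m : ℤ) - (j : ℤ)))

/-- The singular vector `ξ_s^{l,m}` for `0 ≤ κ ≤ n-2`. -/
def xiA2 (q : ℂ) {L : Type} [Field L] (ι : ℂ →+* L) {n : ℕ} (ε : Fin n → Bool)
    (l m s : ℕ) : WW L ε :=
  ∑ j ∈ Finset.range (s + 1),
    ι ((-1 : ℂ) ^ j * q ^ ((j : ℤ) * (2 * (s : ℤ) - (m : ℤ) - (j : ℤ) - 1) + (m : ℤ) * (s : ℤ)) *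
        qbin q s j) •
      kk L ε
        (fun u => if (u : ℕ) < n - 2 then 0
          else if (u : ℕ) = n - 2 then (j : ℤ) else (l : ℤ) - (j : ℤ))
        (fun u => if (u : ℕ) < n - 2 then 0
          else if (u : ℕ) = n - 2 then (s : ℤ) - (j : ℤ) else (m : ℤ) - (s : ℤ) + (j : ℤ))

/-- The type B singular vector `ξ_l`. -/
def xiB (q pc : ℂ) {L : Type} [Field L] (ι : ℂ →+* L) {n : ℕ} (ε : Fin n → Bool)
    (l : ℕ) : WW L ε :=
  ∑ m ∈ Finset.range (l + 1),
    ι ((-pc) ^ (-(m : ℤ)) * q ^ ((m : ℤ) * (l : ℤ) - ((m * (m + 1) / 2 : ℕ) : ℤ)) *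
        qbin q l m) •
      kk L ε (fun u => if (u : ℕ) = n - 1 then (m : ℤ) else 0)
        (fun u => if (u : ℕ) = n - 1 then (l : ℤ) - (m : ℤ) else 0)

/-! ## Miscellany -/

/-- Apply a list of operators, the rightmost element of the list acting first. -/
def appList {L : Type} [Field L] {n : ℕ} {ε : Fin n → Bool}
    (ops : List (WW L ε →ₗ[L] WW L ε)) (v : WW L ε) : WW L ε :=
  ops.foldr (fun A w => A w) v

/-- A natural number as an element of `Fin n`. -/
def mfin {n : ℕ} [NeZero n] (p : ℕ) : Fin n :=
  ⟨p % n, Nat.mod_lt p (Nat.pos_of_ne_zero (NeZero.ne n))⟩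

/-- Reference weight-`l` occupation vector: `(0^{n-l},1^l)` if `κ = n`, `l·e_n` otherwise. -/
def refAN (n κ l : ℕ) : Fin n → ℕ := fun t =>
  if κ = n then (if n - l ≤ (t : ℕ) then 1 else 0) else (if (t : ℕ) = n - 1 then l else 0)

/-- The flip `P(u⊗v) = v⊗u` on `𝒲⊗𝒲`. -/
def Pop (L : Type) [Field L] {n : ℕ} (ε : Fin n → Bool) : WW L ε →ₗ[L] WW L ε :=
  mkEnd L fun p => Finsupp.single (p.2, p.1) 1

/-! ### Hopping of particles between sites -/

/-- A particle may hop from site `a` to site `b` in the configuration `s`: site `a` is occupied, and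
site `b` is free if it is fermionic. -/
def Hop {n : ℕ} {ε : Fin n → Bool} (a b : Fin n) (s : Idx ε) : Prop :=
  0 < s.1 a ∧ (ε b = true → s.1 b = 0)

open Classical in
/-- The configuration after one particle hops from `a` to `b`; the configuration itself if the hop
is not allowed. -/
def mv {n : ℕ} {ε : Fin n → Bool} (a b : Fin n) (s : Idx ε) : Idx ε :=
  if h : Hop a b s then
    ⟨fun t => s.1 t - (if t = a then 1 else 0) + (if t = b then 1 else 0), by
      intro t ht
      have h1 := s.2 t ht
      have h2 := h.2
      by_cases htb : t = b
      · subst htb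
        have := h2 ht
        simp [this]
      · simp only [htb, if_false]
        omega⟩
  else s

lemma mv_apply {n : ℕ} {ε : Fin n → Bool} {a b : Fin n} {s : Idx ε} (h : Hop a b s) (t : Fin n) :
    (mv a b s).1 t = s.1 t - (if t = a then 1 else 0) + (if t = b then 1 else 0) := by
  simp [mv, h]

lemma mv_add {n : ℕ} {ε : Fin n → Bool} {a b : Fin n} {s : Idx ε} (h : Hop a b s) (t : Fin n) :
    (mv a b s).1 t + (if t = a then 1 else 0) = s.1 t + (if t = b then 1 else 0) := by
  rw [mv_apply h]
  have := h.1
  by_cases hta : t = a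
  · subst hta
    simp only [if_true]
    omega
  · simp [hta]

/-- A hop from `a` to `b` changes a weighted particle count by the difference of the weights. -/
lemma mv_weight {n : ℕ} {ε : Fin n → Bool} {a b : Fin n} {s : Idx ε} (h : Hop a b s)
    (w : Fin n → ℕ) : (∑ t, w t * (mv a b s).1 t) + w a = (∑ t, w t * s.1 t) + w b := by
  have : ∑ t, w t * ((mv a b s).1 t + (if t = a then 1 else 0)) =
      ∑ t, w t * (s.1 t + (if t = b then 1 else 0)) :=
    Finset.sum_congr rfl fun t _ => by rw [mv_add h]
  simpa [mul_add, Finset.sum_add_distrib] using this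

lemma mv_sum {n : ℕ} {ε : Fin n → Bool} {a b : Fin n} {s : Idx ε} (h : Hop a b s) :
    ∑ t, (mv a b s).1 t = ∑ t, s.1 t := by
  have := mv_weight h (fun _ => 1)
  simp only [one_mul] at this
  omega

lemma Idx.ext' {n : ℕ} {ε : Fin n → Bool} {s t : Idx ε} (h : ∀ i, s.1 i = t.1 i) : s = t :=
  Subtype.ext (funext h)

lemma hop_mv {n : ℕ} {ε : Fin n → Bool} {a b : Fin n} (hab : a ≠ b) {s : Idx ε}
    (h : Hop a b s) : Hop b a (mv a b s) := by
  refine ⟨?_, fun ha => ?_⟩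
  · have := mv_add h b
    simp only [hab.symm, if_true, if_false] at this
    omega
  · have := mv_add h a
    have h1 := s.2 a ha
    simp only [hab, if_true, if_false] at this
    omega

lemma mv_mv {n : ℕ} {ε : Fin n → Bool} {a b : Fin n} (hab : a ≠ b) {s : Idx ε}
    (h : Hop a b s) : mv b a (mv a b s) = s := by
  apply Idx.ext'
  intro t
  have h1 := mv_add h t
  have h2 := mv_add (hop_mv hab h) t
  omega

lemma mv_inj {n : ℕ} {ε : Fin n → Bool} {a b : Fin n} (hab : a ≠ b) {s s' : Idx ε}
    (h : Hop a b s) (h' : Hop a b s') (e : mv a b s = mv a b s') : s = s' := by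
  rw [← mv_mv hab h, ← mv_mv hab h', e]

/-! ### Two-term operators and a descent lemma -/

/-- The operator on `𝒲 ⊗ 𝒲` that applies the map `g` of labels to the right factor with
coefficient `α`, plus the same on the left factor with coefficient `β`. -/
def op2 {R : Type} [CommRing R] {J : Type} (α β : J × J → R) (g : J → J) :
    (J × J →₀ R) →ₗ[R] (J × J →₀ R) :=
  Finsupp.lsum R fun p => LinearMap.toSpanSingleton R (J × J →₀ R)
    (Finsupp.single (p.1, g p.2) (α p) + Finsupp.single (g p.1, p.2) (β p))

lemma op2_single {R : Type} [CommRing R] {J : Type} (α β : J × J → R) (g : J → J) (p : J × J)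
    (c : R) : op2 α β g (Finsupp.single p c) =
      Finsupp.single (p.1, g p.2) (c * α p) + Finsupp.single (g p.1, p.2) (c * β p) := by
  simp [op2]

/-- Two-term operators commute with extension and specialization of scalars. -/
lemma op2_map {R S : Type} [CommRing R] [CommRing S] (φ : R →+* S) {J : Type} (α β : J × J → R)
    (g : J → J) (u : J × J →₀ R) :
    Finsupp.mapRange φ (map_zero φ) (op2 α β g u) =
      op2 (fun p => φ (α p)) (fun p => φ (β p)) g (Finsupp.mapRange φ (map_zero φ) u) := by
  induction u using Finsupp.induction_linear with
  | zero => simp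
  | add f g hf hg =>
    rw [map_add, Finsupp.mapRange_add (map_add φ), hf, hg, Finsupp.mapRange_add (map_add φ),
      map_add]
  | single p c =>
    simp only [op2_single, Finsupp.mapRange_add (map_add φ), Finsupp.mapRange_single, map_mul]

/-- Operators that act on the basis vectors labelled by `P` as injective partial maps of labels, up
to nonzero scalars, and lower a rank `μ`, can be applied to a nonzero vector until all of
them annihilate each basis vector in its support. -/
lemma descend {F : Type} [Field F] {α ρ : Type} (U : Submodule F (α →₀ F)) (P : α → Prop)
    (D : ρ → (α →₀ F) →ₗ[F] (α →₀ F)) (hD : ∀ r, ∀ u ∈ U, D r u ∈ U)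
    (good : ρ → α → Prop) (g : ρ → α → α)
    (h1 : ∀ r s, P s → ¬ good r s → D r (Finsupp.single s 1) = 0)
    (h2 : ∀ r s, P s → good r s → ∃ c : F, c ≠ 0 ∧ D r (Finsupp.single s 1) =
      Finsupp.single (g r s) c)
    (h3 : ∀ r s, P s → good r s → P (g r s))
    (inj : ∀ r s s', P s → good r s → P s' → good r s' → g r s = g r s' → s = s')
    (μ : α → ℕ) (hμ : ∀ r s, P s → good r s → μ (g r s) < μ s)
    (u : α →₀ F) (hu : u ∈ U) (hu0 : u ≠ 0) (hP : ∀ s ∈ u.support, P s) :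
    ∃ v ∈ U, v ≠ 0 ∧ ∀ s ∈ v.support, P s ∧ ∀ r, ¬ good r s := by
  classical
  suffices H : ∀ (N : ℕ) (u : α →₀ F), u ∈ U → u ≠ 0 → (∀ s ∈ u.support, P s) →
      (∀ s ∈ u.support, μ s < N) →
      ∃ v ∈ U, v ≠ 0 ∧ ∀ s ∈ v.support, P s ∧ ∀ r, ¬ good r s from
    H (u.support.sup μ + 1) u hu hu0 hP fun s hs => Nat.lt_succ_of_le (Finset.le_sup hs)
  intro N
  induction N with
  | zero =>
    intro u _ hu0 _ hN
    obtain ⟨s, hs⟩ := Finsupp.support_nonempty_iff.2 hu0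
    exact absurd (hN s hs) (Nat.not_lt_zero _)
  | succ N ih =>
    intro u hu hu0 hP hN
    by_cases hall : ∀ s ∈ u.support, ∀ r, ¬ good r s
    · exact ⟨u, hu, hu0, fun s hs => ⟨hP s hs, hall s hs⟩⟩
    push Not at hall
    obtain ⟨s₀, hs₀, r, hg₀⟩ := hall
    have hDu : D r u = ∑ s ∈ u.support, u s • D r (Finsupp.single s 1) := by
      conv_lhs => rw [← Finsupp.sum_single u]
      rw [Finsupp.sum, map_sum]
      refine Finset.sum_congr rfl fun s _ => ?_
      rw [← map_smul, Finsupp.smul_single, smul_eq_mul, mul_one]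
    have hval : ∀ t, D r u t = ∑ s ∈ u.support, u s * D r (Finsupp.single s 1) t := by
      intro t
      rw [hDu, Finsupp.finsetSum_apply]
      simp
    have hsupp : ∀ t ∈ (D r u).support, ∃ s ∈ u.support, good r s ∧ t = g r s := by
      intro t ht
      rw [Finsupp.mem_support_iff, hval] at ht
      obtain ⟨s, hs, hne⟩ := Finset.exists_ne_zero_of_sum_ne_zero ht
      refine ⟨s, hs, ?_⟩
      by_cases hgs : good r s
      · obtain ⟨c, _, hc⟩ := h2 r s (hP s hs) hgs
        refine ⟨hgs, ?_⟩
        by_contra hne'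
        rw [hc, Finsupp.single_eq_of_ne hne', mul_zero] at hne
        exact hne rfl
      · rw [h1 r s (hP s hs) hgs] at hne
        simp at hne
    refine ih (D r u) (hD r u hu) ?_ ?_ ?_
    · intro h0
      have hz : D r u (g r s₀) = 0 := by rw [h0]; rfl
      rw [hval, Finset.sum_eq_single s₀] at hz
      · obtain ⟨c, hc0, hc⟩ := h2 r s₀ (hP s₀ hs₀) hg₀
        rw [hc, Finsupp.single_eq_same] at hz
        exact mul_ne_zero (Finsupp.mem_support_iff.1 hs₀) hc0 hz
      · intro s hs hne
        by_cases hgs : good r s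
        · obtain ⟨c, _, hc⟩ := h2 r s (hP s hs) hgs
          rw [hc, Finsupp.single_eq_of_ne, mul_zero]
          intro he
          exact hne (inj r _ _ (hP s hs) hgs (hP s₀ hs₀) hg₀ he.symm)
        · rw [h1 r s (hP s hs) hgs]
          simp
      · intro h
        exact absurd hs₀ h
    · intro t ht
      obtain ⟨s, hs, hgs, rfl⟩ := hsupp t ht
      exact h3 r s (hP s hs) hgs
    · intro t ht
      obtain ⟨s, hs, hgs, rfl⟩ := hsupp t ht
      have := hμ r s (hP s hs) hgs
      have := hN s hs
      omega

/-! ### Irreducibility in the limit `y → 0` -/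

/-- All particles sit at the bosonic site. -/
def Vac {n : ℕ} {ε : Fin n → Bool} (t : Idx ε) : Prop := ∀ i : Fin n, (i : ℕ) + 1 < n → t.1 i = 0

lemma exists_hop_up {n : ℕ} {ε : Fin n → Bool} (hε : ∀ t : Fin n, ε t = true ↔ (t : ℕ) + 1 < n)
    {t : Idx ε} (ht : ¬ Vac t) :
    ∃ (i : ℕ) (h : i + 1 < n), Hop (⟨i, by omega⟩ : Fin n) ⟨i + 1, h⟩ t := by
  by_contra! hno
  apply ht
  have key : ∀ (k i : ℕ) (h : i + k + 2 = n), t.1 ⟨i, by omega⟩ = 0 := by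
    intro k
    induction k with
    | zero =>
      intro i h
      by_contra h0
      refine hno i (by omega) ⟨Nat.pos_of_ne_zero h0, fun he => ?_⟩
      have := (hε _).1 he
      simp only at this
      omega
    | succ k ih =>
      intro i h
      by_contra h0
      exact hno i (by omega) ⟨Nat.pos_of_ne_zero h0, fun _ => ih (i + 1) (by omega)⟩
  intro i hi
  exact key (n - 2 - i) i (by omega)

lemma exists_hop_down {n : ℕ} {ε : Fin n → Bool} (hn : 2 ≤ n) {s : Idx ε} (hs : ¬ Vac s) :
    0 < s.1 ⟨0, by omega⟩ ∨
    ∃ (i : ℕ) (h : i + 2 < n), Hop (⟨i + 1, by omega⟩ : Fin n) ⟨i, by omega⟩ s := by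
  by_contra! hno
  obtain ⟨h0, hno⟩ := hno
  apply hs
  have key : ∀ (i : ℕ) (h : i + 1 < n), s.1 ⟨i, by omega⟩ = 0 := by
    intro i
    induction i with
    | zero => intro _; exact Nat.le_zero.1 h0
    | succ i ih =>
      intro h
      by_contra h0
      exact hno i (by omega) ⟨Nat.pos_of_ne_zero h0, fun _ => ih (by omega)⟩
  intro i hi
  exact key i hi

lemma Vac.not_hop {n : ℕ} {ε : Fin n → Bool} {t : Idx ε} (ht : Vac t) {a b : Fin n}
    (ha : (a : ℕ) + 1 < n) : ¬ Hop a b t := fun h => absurd (ht a ha) h.1.ne'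

lemma Vac.eq {n : ℕ} {ε : Fin n → Bool} (hn : 2 ≤ n) {s t : Idx ε} (hs : Vac s) (ht : Vac t)
    (h : ∑ i, s.1 i = ∑ i, t.1 i) : s = t := by
  have key : ∀ {u : Idx ε}, Vac u → ∑ i, u.1 i = u.1 ⟨n - 1, by omega⟩ := by
    intro u hu
    refine Finset.sum_eq_single _ (fun i _ hi => hu i ?_) (by simp)
    have : (i : ℕ) ≠ n - 1 := fun h => hi (Fin.ext h)
    omega
  rw [key hs, key ht] at h
  apply Idx.ext'
  intro i
  by_cases hi : (i : ℕ) + 1 < n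
  · rw [hs i hi, ht i hi]
  · have : i = ⟨n - 1, by omega⟩ := Fin.ext (by simp only; omega)
    rw [this, h]

/-- The subspace `U` is stable under some operator that hops a particle from `a` to `b` in either
tensor factor, with coefficients that vanish only where the hop is not allowed. -/
def HopStable {F : Type} [Field F] {n : ℕ} {ε : Fin n → Bool}
    (U : Submodule F (Idx ε × Idx ε →₀ F)) (a b : Fin n) : Prop :=
  ∃ α β : Idx ε × Idx ε → F, (∀ p, α p ≠ 0 ↔ Hop a b p.2) ∧ (∀ p, β p ≠ 0 ↔ Hop a b p.1) ∧
    ∀ u ∈ U, op2 α β (mv a b) u ∈ U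

/-- As `HopStable`, with the hop in the left factor only. -/
def HopStableL {F : Type} [Field F] {n : ℕ} {ε : Fin n → Bool}
    (U : Submodule F (Idx ε × Idx ε →₀ F)) (a b : Fin n) : Prop :=
  ∃ β : Idx ε × Idx ε → F, (∀ p, β p ≠ 0 ↔ Hop a b p.1) ∧
    ∀ u ∈ U, op2 (fun _ => 0) β (mv a b) u ∈ U

/-- As `HopStable`, with the hop in the right factor only. -/
def HopStableR {F : Type} [Field F] {n : ℕ} {ε : Fin n → Bool}
    (U : Submodule F (Idx ε × Idx ε →₀ F)) (a b : Fin n) : Prop :=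
  ∃ α : Idx ε × Idx ε → F, (∀ p, α p ≠ 0 ↔ Hop a b p.2) ∧
    ∀ u ∈ U, op2 α (fun _ => 0) (mv a b) u ∈ U

lemma mem_of_single {F : Type} [Field F] {J : Type} {U : Submodule F (J →₀ F)} {p : J} {c : F}
    (hc : c ≠ 0) (h : Finsupp.single p c ∈ U) : Finsupp.single p 1 ∈ U := by
  have := U.smul_mem c⁻¹ h
  rwa [Finsupp.smul_single, smul_eq_mul, inv_mul_cancel₀ hc] at this

/-- If the hop is allowed in the left factor and the term from the right factor is already in `U`,
then the term from the left factor is in `U`. -/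
lemma HopStable.left {F : Type} [Field F] {n : ℕ} {ε : Fin n → Bool}
    {U : Submodule F (Idx ε × Idx ε →₀ F)} {a b : Fin n} (h : HopStable U a b) {s t : Idx ε}
    (hst : Finsupp.single (s, t) 1 ∈ U) (hs : Hop a b s)
    (hr : Hop a b t → Finsupp.single (s, mv a b t) 1 ∈ U) :
    Finsupp.single (mv a b s, t) 1 ∈ U := by
  obtain ⟨α, β, hα, hβ, hU⟩ := h
  have h1 := hU _ hst
  rw [op2_single, one_mul, one_mul] at h1
  refine mem_of_single ((hβ (s, t)).2 hs) ((Submodule.add_mem_iff_right U ?_).1 h1)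
  by_cases ht : Hop a b t
  · have := U.smul_mem (α (s, t)) (hr ht)
    rwa [Finsupp.smul_single, smul_eq_mul, mul_one] at this
  · have : α (s, t) = 0 := not_not.1 fun h0 => ht ((hα (s, t)).1 h0)
    rw [this, Finsupp.single_zero]
    exact U.zero_mem

lemma HopStable.right {F : Type} [Field F] {n : ℕ} {ε : Fin n → Bool}
    {U : Submodule F (Idx ε × Idx ε →₀ F)} {a b : Fin n} (h : HopStable U a b) {s t : Idx ε}
    (hst : Finsupp.single (s, t) 1 ∈ U) (ht : Hop a b t) (hs : ¬ Hop a b s) :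
    Finsupp.single (s, mv a b t) 1 ∈ U := by
  obtain ⟨α, β, hα, hβ, hU⟩ := h
  have h1 := hU _ hst
  have h0 : β (s, t) = 0 := not_not.1 fun h0 => hs ((hβ (s, t)).1 h0)
  rw [op2_single, one_mul, one_mul, h0, Finsupp.single_zero, add_zero] at h1
  exact mem_of_single ((hα (s, t)).2 ht) h1

/-- Composing the hop from site `0` to the bosonic site in the right factor with the hops
`i → i - 1 → ⋯ → 0` gives an operator which, on basis vectors whose right factor is empty at the sites
before `i`, removes a particle from site `i` of the right factor: any term in which
one of the hops happens in the left factor is annihilated, as the right factor is then empty at the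
site used by the next hop that is forced. -/
lemma exists_clear {F : Type} [Field F] {n : ℕ} (hn : 2 ≤ n) {ε : Fin n → Bool}
    (hε : ∀ t : Fin n, ε t = true ↔ (t : ℕ) + 1 < n)
    {U : Submodule F (Idx ε × Idx ε →₀ F)}
    (hdn : ∀ (i : ℕ) (h : i + 1 < n), HopStable U ⟨i + 1, h⟩ ⟨i, by omega⟩)
    (hF : HopStableR U ⟨0, by omega⟩ ⟨n - 1, by omega⟩) (i : ℕ) (hi : i + 1 < n) :
    ∃ G : (Idx ε × Idx ε →₀ F) →ₗ[F] (Idx ε × Idx ε →₀ F), (∀ u ∈ U, G u ∈ U) ∧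
      (∀ s t : Idx ε, (∀ j : Fin n, (j : ℕ) ≤ i → t.1 j = 0) → G (Finsupp.single (s, t) 1) = 0) ∧
      (∀ s t : Idx ε, (∀ j : Fin n, (j : ℕ) < i → t.1 j = 0) → 0 < t.1 ⟨i, by omega⟩ →
        ∃ c : F, c ≠ 0 ∧ G (Finsupp.single (s, t) 1) =
          Finsupp.single (s, mv ⟨i, by omega⟩ ⟨n - 1, by omega⟩ t) c) := by
  have hlast : ∀ h, ε ⟨n - 1, h⟩ ≠ true := fun h he => by
    have := (hε _).1 he
    simp only at this
    omega
  induction i with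
  | zero =>
    obtain ⟨α, hα, hU⟩ := hF
    refine ⟨_, hU, ?_, ?_⟩
    · intro s t ht
      have h0 : α (s, t) = 0 := not_not.1 fun h0 =>
        absurd (ht ⟨0, by omega⟩ le_rfl) ((hα (s, t)).1 h0).1.ne'
      simp [op2_single, h0]
    · intro s t _ ht
      exact ⟨α (s, t), (hα (s, t)).2 ⟨ht, fun he => absurd he (hlast _)⟩, by simp [op2_single]⟩
  | succ i ih =>
    obtain ⟨G, hGU, hG0, hG1⟩ := ih (by omega)
    obtain ⟨α, β, hα, hβ, hU⟩ := hdn i (by omega)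
    have hG0' : ∀ (s t : Idx ε) (c : F), (∀ j : Fin n, (j : ℕ) ≤ i → t.1 j = 0) →
        G (Finsupp.single (s, t) c) = 0 := by
      intro s t c ht
      have := hG0 s t ht
      rw [← mul_one c, ← smul_eq_mul, ← Finsupp.smul_single, map_smul, this, smul_zero]
    refine ⟨G ∘ₗ op2 α β _, fun u hu => hGU _ (hU u hu), ?_, ?_⟩
    · intro s t ht
      have h0 : α (s, t) = 0 := not_not.1 fun h0 =>
        absurd (ht ⟨i + 1, by omega⟩ le_rfl) ((hα (s, t)).1 h0).1.ne'
      rw [LinearMap.comp_apply, op2_single, h0, mul_zero, Finsupp.single_zero, zero_add]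
      exact hG0' _ _ _ fun j hj => ht j (by omega)
    · intro s t ht hpos
      have hH : Hop (⟨i + 1, by omega⟩ : Fin n) ⟨i, by omega⟩ t :=
        ⟨hpos, fun _ => ht _ (Nat.lt_succ_self i)⟩
      have hm := mv_add hH
      obtain ⟨c, hc, hGc⟩ := hG1 s (mv ⟨i + 1, by omega⟩ ⟨i, by omega⟩ t) (by
        intro j hj
        have h1 := hm j
        have h2 := ht j (by omega)
        have h3 : j ≠ ⟨i, by omega⟩ := fun h => by simp [h] at hj
        simp only [h3, if_false] at h1
        omega) (hop_mv (by simp) hH).1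
      have hH' : Hop (⟨i, by omega⟩ : Fin n) ⟨n - 1, by omega⟩
          (mv (⟨i + 1, by omega⟩ : Fin n) ⟨i, by omega⟩ t) :=
        ⟨(hop_mv (by simp) hH).1, fun he => absurd he (hlast _)⟩
      have hH2 : Hop (⟨i + 1, by omega⟩ : Fin n) ⟨n - 1, by omega⟩ t :=
        ⟨hpos, fun he => absurd he (hlast _)⟩
      have hmm : mv (⟨i, by omega⟩ : Fin n) ⟨n - 1, by omega⟩
          (mv (⟨i + 1, by omega⟩ : Fin n) ⟨i, by omega⟩ t) =
          mv ⟨i + 1, by omega⟩ ⟨n - 1, by omega⟩ t := by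
        apply Idx.ext'
        intro j
        have h1 := mv_add hH' j
        have h2 := hm j
        have h3 := mv_add hH2 j
        omega
      refine ⟨α (s, t) * c, mul_ne_zero ((hα (s, t)).2 hH) hc, ?_⟩
      rw [LinearMap.comp_apply, op2_single, map_add, hG0' (mv _ _ s) t _ fun j hj => ht j (by omega),
        add_zero, one_mul]
      have : (Finsupp.single (s, mv (⟨i + 1, by omega⟩ : Fin n) ⟨i, by omega⟩ t) (α (s, t)) :
          Idx ε × Idx ε →₀ F) = α (s, t) •
          Finsupp.single (s, mv (⟨i + 1, by omega⟩ : Fin n) ⟨i, by omega⟩ t) 1 := by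
        rw [Finsupp.smul_single, smul_eq_mul, mul_one]
      rw [this, map_smul, hGc, Finsupp.smul_single, smul_eq_mul, hmm]

/-- A nonzero subspace of `𝒲_l ⊗ 𝒲_m` stable under all hops between adjacent sites of the open
chain, under hops from the bosonic site to site `0` in the left factor, and under the opposite hops
in the right factor, contains every basis vector. -/
lemma limit_irred {F : Type} [Field F] {n : ℕ} (hn : 2 ≤ n) {ε : Fin n → Bool}
    (hε : ∀ t : Fin n, ε t = true ↔ (t : ℕ) + 1 < n) {l m : ℕ}
    {U : Submodule F (Idx ε × Idx ε →₀ F)} (hU : U ≠ ⊥)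
    (hsum : ∀ u ∈ U, ∀ p ∈ u.support, ∑ t, p.1.1 t = l ∧ ∑ t, p.2.1 t = m)
    (hup : ∀ (i : ℕ) (h : i + 1 < n), HopStable U ⟨i, by omega⟩ ⟨i + 1, h⟩)
    (hdn : ∀ (i : ℕ) (h : i + 1 < n), HopStable U ⟨i + 1, h⟩ ⟨i, by omega⟩)
    (hE : HopStableL U ⟨n - 1, by omega⟩ ⟨0, by omega⟩)
    (hF : HopStableR U ⟨0, by omega⟩ ⟨n - 1, by omega⟩)
    (s t : Idx ε) (hs : ∑ i, s.1 i = l) (ht : ∑ i, t.1 i = m) :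
    Finsupp.single (s, t) 1 ∈ U := by
  have hlast : ∀ h, ε ⟨n - 1, h⟩ ≠ true := fun h he => by
    have := (hε _).1 he
    simp only at this
    omega
  -- A nonzero vector whose right factors are all vacuum.
  have step1 : ∀ i : ℕ, i + 1 ≤ n → ∃ u ∈ U, u ≠ 0 ∧
      ∀ p ∈ u.support, ∀ j : Fin n, (j : ℕ) < i → p.2.1 j = 0 := by
    intro i
    induction i with
    | zero =>
      intro _
      obtain ⟨u, hu, hu0⟩ := Submodule.exists_mem_ne_zero_of_ne_bot hU
      exact ⟨u, hu, hu0, fun p _ j hj => absurd hj (Nat.not_lt_zero _)⟩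
    | succ i ih =>
      intro hi
      obtain ⟨u, hu, hu0, hP⟩ := ih (by omega)
      obtain ⟨G, hGU, hG0, hG1⟩ := exists_clear hn hε hdn hF i hi
      have hH : ∀ t : Idx ε, 0 < t.1 ⟨i, by omega⟩ →
          Hop (⟨i, by omega⟩ : Fin n) ⟨n - 1, by omega⟩ t := fun t h =>
        ⟨h, fun he => absurd he (hlast _)⟩
      have hne : (⟨i, by omega⟩ : Fin n) ≠ ⟨n - 1, by omega⟩ := by
        simp only [ne_eq, Fin.mk.injEq]; omega
      obtain ⟨v, hv, hv0, hvP⟩ := descend (ρ := Unit) U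
        (fun p => ∀ j : Fin n, (j : ℕ) < i → p.2.1 j = 0) (fun _ => G) (fun _ => hGU)
        (fun _ p => 0 < p.2.1 ⟨i, by omega⟩)
        (fun _ p => (p.1, mv ⟨i, by omega⟩ ⟨n - 1, by omega⟩ p.2))
        (fun _ p hp hg => hG0 p.1 p.2 fun j hj => by
          rcases hj.lt_or_eq with h | h
          · exact hp j h
          · have : j = ⟨i, by omega⟩ := Fin.ext h
            rw [this]
            exact Nat.le_zero.1 (not_lt.1 hg))
        (fun _ p hp hg => hG1 p.1 p.2 hp hg)
        (fun _ p hp hg j hj => by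
          have h1 := mv_add (hH p.2 hg) j
          have h2 := hp j hj
          have h3 : j ≠ ⟨n - 1, by omega⟩ := fun h => by simp only [h] at hj; omega
          simp only [h3, if_false] at h1
          dsimp only
          omega)
        (fun _ p p' _ hg _ hg' he => by
          have he1 := congrArg Prod.fst he
          have he2 := congrArg Prod.snd he
          exact Prod.ext he1 (mv_inj hne (hH _ hg) (hH _ hg') he2))
        (fun p => p.2.1 ⟨i, by omega⟩)
        (fun _ p _ hg => by
          have h1 := mv_add (hH p.2 hg) ⟨i, by omega⟩
          simp only [hne, if_true, if_false] at h1
          dsimp only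
          omega)
        u hu hu0 hP
      refine ⟨v, hv, hv0, fun p hp j hj => ?_⟩
      obtain ⟨h1, h2⟩ := hvP p hp
      rcases (Nat.lt_succ_iff.1 hj).lt_or_eq with h | h
      · exact h1 j h
      · have : j = ⟨i, by omega⟩ := Fin.ext h
        rw [this]
        exact Nat.le_zero.1 (not_lt.1 (h2 ()))
  have hcong : ∀ {i j : ℕ} (hi : i < n) (hj : j < n), i ≠ j → (⟨i, hi⟩ : Fin n) ≠ ⟨j, hj⟩ :=
    fun _ _ h h' => h (by simpa using h')
  -- The vacuum, reached by moving the particles in the left factor to the bosonic site.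
  have step2 : ∃ s t : Idx ε, Vac s ∧ Vac t ∧ ∑ i, s.1 i = l ∧ ∑ i, t.1 i = m ∧
      Finsupp.single (s, t) 1 ∈ U := by
    obtain ⟨u, hu, hu0, hP⟩ := step1 (n - 1) (by omega)
    choose α β hα hβ hUU using hup
    obtain ⟨v, hv, hv0, hvP⟩ := descend (ρ := {i : ℕ // i + 1 < n}) U
      (fun p => Vac p.2) (fun i => op2 (α i i.2) (β i i.2) _) (fun i => hUU i i.2)
      (fun i p => Hop ⟨i, by omega⟩ ⟨i + 1, i.2⟩ p.1)
      (fun i p => (mv ⟨i, by omega⟩ ⟨i + 1, i.2⟩ p.1, p.2))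
      (fun i p hp hg => by
        have h0 : α i i.2 p = 0 := not_not.1 fun h0 => hp.not_hop i.2 ((hα i i.2 p).1 h0)
        have h1 : β i i.2 p = 0 := not_not.1 fun h0 => hg ((hβ i i.2 p).1 h0)
        simp [op2_single, h0, h1])
      (fun i p hp hg => by
        have h0 : α i i.2 p = 0 := not_not.1 fun h0 => hp.not_hop i.2 ((hα i i.2 p).1 h0)
        exact ⟨β i i.2 p, (hβ i i.2 p).2 hg, by simp [op2_single, h0]⟩)
      (fun i p hp _ => hp)
      (fun i p p' _ hg _ hg' he => by
        have he1 := congrArg Prod.fst he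
        have he2 := congrArg Prod.snd he
        exact Prod.ext (mv_inj (hcong _ _ (by omega)) hg hg' he1) he2)
      (fun p => ∑ t : Fin n, (n - t) * p.1.1 t)
      (fun i p _ hg => by
        have := mv_weight hg (fun t => n - t)
        have hi := i.2
        simp only at this ⊢
        omega)
      u hu hu0 (fun p hp j hj => hP p hp j (by omega))
    obtain ⟨p, hp⟩ := Finsupp.support_nonempty_iff.2 hv0
    have hvac : ∀ p ∈ v.support, Vac p.1 := fun p hp => by
      by_contra h
      obtain ⟨i, hi, hH⟩ := exists_hop_up hε h
      exact (hvP p hp).2 ⟨i, hi⟩ hH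
    have hvs : v = Finsupp.single p (v p) := by
      ext p'
      by_cases h : p' = p
      · rw [h, Finsupp.single_eq_same]
      · rw [Finsupp.single_eq_of_ne h]
        by_contra h0
        have hp' := Finsupp.mem_support_iff.2 h0
        apply h
        refine Prod.ext ((hvac p' hp').eq hn (hvac p hp) ?_) ((hvP p' hp').1.eq hn (hvP p hp).1 ?_)
        · rw [(hsum v hv p' hp').1, (hsum v hv p hp).1]
        · rw [(hsum v hv p' hp').2, (hsum v hv p hp).2]
    refine ⟨p.1, p.2, hvac p hp, (hvP p hp).1, (hsum v hv p hp).1, (hsum v hv p hp).2, ?_⟩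
    rw [hvs] at hv
    exact mem_of_single (Finsupp.mem_support_iff.1 hp) hv
  -- Over the vacuum of the right factor, particles are inserted at site `0` and moved up.
  have step3 : ∀ (N : ℕ) (s t : Idx ε), ∑ i, s.1 i = l → ∑ i, t.1 i = m → Vac t →
      (∑ j : Fin n, (if (j : ℕ) + 1 < n then (j : ℕ) + 1 else 0) * s.1 j) < N →
      Finsupp.single (s, t) 1 ∈ U := by
    intro N
    induction N with
    | zero => intro s t _ _ _ h; exact absurd h (Nat.not_lt_zero _)
    | succ N ih =>
      intro s t hs ht htv hN
      by_cases hsv : Vac s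
      · obtain ⟨s', t', hs', ht', hl, hm, hmem⟩ := step2
        rwa [hsv.eq hn hs' (hs.trans hl.symm), htv.eq hn ht' (ht.trans hm.symm)]
      rcases exists_hop_down hn hsv with h0 | ⟨i, hi, hH⟩
      · have hH : Hop (⟨0, by omega⟩ : Fin n) ⟨n - 1, by omega⟩ s :=
          ⟨h0, fun he => absurd he (hlast _)⟩
        have hne := hcong (i := 0) (j := n - 1) (by omega) (by omega) (by omega)
        have hw := mv_weight hH (fun j => if (j : ℕ) + 1 < n then (j : ℕ) + 1 else 0)
        simp only at hw
        rw [if_pos (by omega), if_neg (by omega)] at hw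
        have hmem := ih _ t ((mv_sum hH).trans hs) ht htv (by omega)
        obtain ⟨β, hβ, hUU⟩ := hE
        have h1 := hUU _ hmem
        rw [op2_single, mul_zero, Finsupp.single_zero, zero_add, one_mul] at h1
        dsimp only at h1
        rw [mv_mv hne hH] at h1
        exact mem_of_single ((hβ _).2 (hop_mv hne hH)) h1
      · have hne := hcong (i := i + 1) (j := i) (by omega) (by omega) (by omega)
        have hw := mv_weight hH (fun j => if (j : ℕ) + 1 < n then (j : ℕ) + 1 else 0)
        simp only at hw
        rw [if_pos (by omega), if_pos (by omega)] at hw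
        have hmem := ih _ t ((mv_sum hH).trans hs) ht htv (by omega)
        have := (hup i (by omega)).left hmem (hop_mv hne hH)
          fun h => absurd h (htv.not_hop (by simp only; omega))
        rwa [mv_mv hne hH] at this
  -- Next to a left factor in which no particle can move down, the right factor is arbitrary.
  have step4 : ∀ (N : ℕ) (s t : Idx ε), ∑ i, s.1 i = l → ∑ i, t.1 i = m →
      (∀ (i : ℕ) (h : i + 1 < n), ¬ Hop (⟨i + 1, h⟩ : Fin n) ⟨i, by omega⟩ s) →
      (∑ j : Fin n, (n - j) * t.1 j) < N → Finsupp.single (s, t) 1 ∈ U := by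
    intro N
    induction N with
    | zero => intro s t _ _ _ h; exact absurd h (Nat.not_lt_zero _)
    | succ N ih =>
      intro s t hs ht hbot hN
      by_cases htv : Vac t
      · exact step3 _ s t hs ht htv (Nat.lt_succ_self _)
      obtain ⟨i, hi, hH⟩ := exists_hop_up hε htv
      have hne := hcong (i := i) (j := i + 1) (by omega) (by omega) (by omega)
      have hw := mv_weight hH (fun j => n - j)
      simp only at hw
      have hmem := ih s _ hs ((mv_sum hH).trans ht) hbot (by omega)
      have := (hdn i hi).right hmem (hop_mv hne hH) (hbot i hi)
      rwa [mv_mv hne hH] at this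
  -- Moving particles up in the left factor; the right factor is kept arbitrary.
  have step5 : ∀ (N : ℕ) (s : Idx ε), ∑ i, s.1 i = l → (∑ j : Fin n, (j : ℕ) * s.1 j) < N →
      ∀ t : Idx ε, ∑ i, t.1 i = m → Finsupp.single (s, t) 1 ∈ U := by
    intro N
    induction N with
    | zero => intro s _ h; exact absurd h (Nat.not_lt_zero _)
    | succ N ih =>
      intro s hs hN t ht
      by_cases hbot : ∀ (i : ℕ) (h : i + 1 < n), ¬ Hop (⟨i + 1, h⟩ : Fin n) ⟨i, by omega⟩ s
      · exact step4 _ s t hs ht hbot (Nat.lt_succ_self _)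
      push Not at hbot
      obtain ⟨i, hi, hH⟩ := hbot
      have hne := hcong (i := i + 1) (j := i) (by omega) (by omega) (by omega)
      have hw := mv_weight hH (fun j => (j : ℕ))
      simp only at hw
      have hmem := ih _ ((mv_sum hH).trans hs) (by omega)
      have := (hup i hi).left (hmem t ht) (hop_mv hne hH)
        fun h => hmem _ ((mv_sum h).trans ht)
      rwa [mv_mv hne hH] at this
  exact step5 _ s hs (Nat.lt_succ_self _) t ht

/-! ### Specialization at `y = 0` -/

open Polynomial in
/-- The specialization at `X = 0` of a subspace `U` over `K(X)`: the values at `X = 0` of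
the vectors of `U` with coordinates in `K[X]`. -/
def redAt0 {F : Type} [Field F] {J : Type} (U : Submodule (RatFunc F) (J →₀ RatFunc F)) :
    Submodule F (J →₀ F) where
  carrier := {w | ∃ u : J →₀ F[X], Finsupp.mapRange constantCoeff (map_zero _) u = w ∧
    Finsupp.mapRange (algebraMap F[X] (RatFunc F)) (map_zero _) u ∈ U}
  zero_mem' := ⟨0, by simp, by simp⟩
  add_mem' := by
    rintro _ _ ⟨u, rfl, hu⟩ ⟨v, rfl, hv⟩
    refine ⟨u + v, Finsupp.mapRange_add (map_add _) _ _, ?_⟩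
    rw [Finsupp.mapRange_add (map_add _)]
    exact U.add_mem hu hv
  smul_mem' := by
    rintro c _ ⟨u, rfl, hu⟩
    refine ⟨C c • u, by ext; simp, ?_⟩
    have := U.smul_mem (algebraMap F[X] (RatFunc F) (C c)) hu
    convert this using 1
    ext
    simp

open Polynomial in
/-- Clearing denominators and dividing by the largest possible power of `X` gives a vector of `U`
with nonzero specialization. -/
lemma redAt0_ne_bot {F : Type} [Field F] {J : Type}
    {U : Submodule (RatFunc F) (J →₀ RatFunc F)} (hU : U ≠ ⊥) : redAt0 U ≠ ⊥ := by
  classical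
  obtain ⟨v, hv, hv0⟩ := Submodule.exists_mem_ne_zero_of_ne_bot hU
  obtain ⟨i₀, hi₀⟩ := Finsupp.support_nonempty_iff.2 hv0
  have key : ∀ (N : ℕ) (u : J →₀ F[X]), u i₀ ≠ 0 → (u i₀).natDegree < N →
      Finsupp.mapRange (algebraMap F[X] (RatFunc F)) (map_zero _) u ∈ U → redAt0 U ≠ ⊥ := by
    intro N
    induction N with
    | zero => intro u _ h; exact absurd h (Nat.not_lt_zero _)
    | succ N ih =>
      intro u hu0 hN hu
      by_cases hw : Finsupp.mapRange (constantCoeff : F[X] →+* F) (map_zero _) u = 0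
      · have hc : ∀ i, (u i).coeff 0 = 0 := fun i => by
          simpa using DFunLike.congr_fun hw i
        have hdiv : ∀ i, divX (u i) * X = u i := fun i => by
          have := divX_mul_X_add (u i)
          rwa [hc i, C_0, add_zero] at this
        have hne : divX (u i₀) ≠ 0 := fun h => hu0 (by rw [← hdiv i₀, h, zero_mul])
        refine ih (Finsupp.mapRange divX divX_zero u) (by simpa using hne) ?_ ?_
        · have h1 : (u i₀).natDegree = (divX (u i₀)).natDegree + 1 := by
            conv_lhs => rw [← hdiv i₀]
            exact natDegree_mul_X hne
          rw [Finsupp.mapRange_apply]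
          omega
        · have hX : (RatFunc.X : RatFunc F) ≠ 0 := RatFunc.X_ne_zero
          convert U.smul_mem (RatFunc.X : RatFunc F)⁻¹ hu using 1
          ext i
          simp only [Finsupp.mapRange_apply, Finsupp.smul_apply, smul_eq_mul]
          conv_rhs => rw [← hdiv i]
          rw [map_mul, RatFunc.algebraMap_X]
          field_simp
      · exact fun h => hw ((Submodule.eq_bot_iff _).1 h _ ⟨u, rfl, hu⟩)
  obtain ⟨b, hb⟩ := IsLocalization.exist_integer_multiples_of_finset
    (nonZeroDivisors F[X]) (v.support.image v)
  have hb' : ∀ i, ∃ p : F[X], algebraMap F[X] (RatFunc F) p =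
      algebraMap F[X] (RatFunc F) b * v i ∧ (v i = 0 → p = 0) := by
    intro i
    by_cases h : v i = 0
    · exact ⟨0, by simp [h], fun _ => rfl⟩
    · obtain ⟨p, hp⟩ := hb (v i) (Finset.mem_image_of_mem v (Finsupp.mem_support_iff.2 h))
      exact ⟨p, by rw [hp, Algebra.smul_def], fun h' => absurd h' h⟩
  choose p hp hp0 using hb'
  have hb0 : algebraMap F[X] (RatFunc F) b ≠ 0 :=
    (map_ne_zero_iff _ (IsFractionRing.injective F[X] (RatFunc F))).2
      (nonZeroDivisors.ne_zero b.2)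
  let u : J →₀ F[X] := Finsupp.onFinset v.support p fun i hi =>
    Finsupp.mem_support_iff.2 fun h => hi (hp0 i h)
  have hui : ∀ i, u i = p i := fun _ => rfl
  refine key _ u (fun h => ?_) (Nat.lt_succ_self _) ?_
  · have := hp i₀
    rw [← hui, h, map_zero] at this
    exact mul_ne_zero hb0 (Finsupp.mem_support_iff.1 hi₀) this.symm
  · convert U.smul_mem (algebraMap F[X] (RatFunc F) b) hv using 1
    ext i
    rw [Finsupp.mapRange_apply, Finsupp.smul_apply, hui, hp, smul_eq_mul]

open Polynomial in
lemma redAt0_op2 {F : Type} [Field F] {J : Type}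
    {U : Submodule (RatFunc F) (J × J →₀ RatFunc F)} (α β : J × J → F[X]) (g : J → J)
    (h : ∀ u ∈ U, op2 (fun p => algebraMap F[X] (RatFunc F) (α p))
      (fun p => algebraMap F[X] (RatFunc F) (β p)) g u ∈ U) :
    ∀ u ∈ redAt0 U, op2 (fun p => (α p).coeff 0) (fun p => (β p).coeff 0) g u ∈ redAt0 U := by
  rintro _ ⟨u, rfl, hu⟩
  refine ⟨op2 α β g u, ?_, ?_⟩
  · rw [op2_map]
    rfl
  · rw [op2_map]
    exact h _ hu

open Polynomial in
/-- If the specialization of `U` contains the basis vectors labelled by a finite set `S` and the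
vectors of `U` are supported on `S`, then `U` contains these basis vectors: the matrix formed by
lifts of the basis vectors specializes to the identity, so its determinant is nonzero. -/
lemma mem_of_redAt0 {F : Type} [Field F] {J : Type}
    {U : Submodule (RatFunc F) (J →₀ RatFunc F)} {S : Set J} (hS : S.Finite)
    (hsupp : ∀ u ∈ U, ∀ p ∈ u.support, p ∈ S)
    (h : ∀ p ∈ S, Finsupp.single p 1 ∈ redAt0 U) (p : J) (hp : p ∈ S) :
    Finsupp.single p 1 ∈ U := by
  classical
  have := hS.fintype
  choose u hu huU using fun p : S => h p p.2
  let M : Matrix S S F[X] := Matrix.of fun p p' => u p p'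
  have hM : M.map constantCoeff = 1 := by
    ext p p'
    have := DFunLike.congr_fun (hu p) (p' : J)
    rw [Finsupp.mapRange_apply] at this
    change constantCoeff (u p p') = _
    rw [this, Matrix.one_apply, Finsupp.single_apply]
    simp only [Subtype.ext_iff]
  have hdet : M.det ≠ 0 := fun h0 => by
    have h1 := RingHom.map_det (constantCoeff : F[X] →+* F) M
    rw [h0, map_zero, RingHom.mapMatrix_apply, hM, Matrix.det_one] at h1
    exact zero_ne_one h1
  have hdet' : algebraMap F[X] (RatFunc F) M.det ≠ 0 :=
    (map_ne_zero_iff _ (IsFractionRing.injective F[X] (RatFunc F))).2 hdet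
  let w : J →₀ RatFunc F := ∑ p' : S, algebraMap F[X] (RatFunc F) (M.adjugate ⟨p, hp⟩ p') •
    Finsupp.mapRange (algebraMap F[X] (RatFunc F)) (map_zero _) (u p')
  have hw : w ∈ U := U.sum_mem fun p' _ => U.smul_mem _ (huU p')
  have hwe : w = Finsupp.single p (algebraMap F[X] (RatFunc F) M.det) := by
    ext j
    by_cases hj : j ∈ S
    · have h1 := congrFun (congrFun (Matrix.adjugate_mul M) ⟨p, hp⟩) ⟨j, hj⟩
      rw [Matrix.mul_apply, Matrix.smul_apply, Matrix.one_apply] at h1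
      have h2 := congrArg (algebraMap F[X] (RatFunc F)) h1
      rw [map_sum] at h2
      simp only [w, Finsupp.finsetSum_apply, Finsupp.smul_apply, Finsupp.mapRange_apply,
        smul_eq_mul, ← map_mul]
      refine h2.trans ?_
      rw [Finsupp.single_apply]
      simp only [Subtype.mk.injEq]
      split_ifs <;> simp
    · rw [Finsupp.single_eq_of_ne fun h : j = p => hj (by rw [h]; exact hp)]
      by_contra h0
      exact hj (hsupp w hw j (Finsupp.mem_support_iff.2 h0))
  exact mem_of_single hdet' (hwe ▸ hw)

/-! ### The generators as two-term operators -/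

lemma mkEnd_single (L : Type) [Field L] {α : Type} (v : α → (α →₀ L)) (a : α) :
    mkEnd L v (Finsupp.single a 1) = v a := by
  simp [mkEnd]

lemma tens_single (L : Type) [Field L] {n : ℕ} {ε : Fin n → Bool} (a b : Idx ε) (c d : L) :
    tens L (Finsupp.single a c) (Finsupp.single b d) = Finsupp.single (a, b) (c * d) := by
  simp [tens]

/-- The cyclic predecessor of a site. -/
def pr {n : ℕ} (r : Fin n) : Fin n := ⟨((r : ℕ) + n - 1) % n, Nat.mod_lt _ r.pos⟩

lemma av_coe {n : ℕ} (f : Fin n → ℕ) (r : Fin n) : av f (r : ℕ) = f r := by simp [av]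

open Classical in
/-- The coefficient `[s_a]` of a hop from `a` to `b`; zero if the hop is not allowed. -/
def hopc (q : ℂ) {n : ℕ} {ε : Fin n → Bool} (a b : Fin n) (s : Idx ε) : ℂ :=
  if Hop a b s then qnum q (s.1 a) else 0

lemma hopc_ne_zero {q : ℂ} (hq0 : q ≠ 0) (hq : ∀ k : ℕ, k ≠ 0 → q ^ k ≠ 1) {n : ℕ}
    {ε : Fin n → Bool} (a b : Fin n) (s : Idx ε) : hopc q a b s ≠ 0 ↔ Hop a b s := by
  unfold hopc
  split_ifs with h
  · simp only [h, iff_true]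
    have key : ∀ k : ℕ, k ≠ 0 → q ^ k - q⁻¹ ^ k ≠ 0 := by
      intro k hk h0
      apply hq (2 * k) (by omega)
      have h1 : q ^ k = q⁻¹ ^ k := sub_eq_zero.1 h0
      rw [two_mul, pow_add]
      nth_rewrite 2 [h1]
      rw [← mul_pow, mul_inv_cancel₀ hq0, one_pow]
    refine div_ne_zero (key _ h.1.ne') ?_
    simpa using key 1 one_ne_zero
  · simp [h]

lemma smul_ket (q : ℂ) {L : Type} [Field L] (ι : ℂ →+* L) {n : ℕ} {ε : Fin n → Bool}
    {a b : Fin n} (hab : a ≠ b) (s : Idx ε) (z : L) (f : Fin n → ℤ)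
    (hf : ∀ t, f t = (s.1 t : ℤ) - dlt (a : ℕ) t + dlt (b : ℕ) t) :
    (z * ι (qnum q (s.1 a))) • ket L ε f =
      Finsupp.single (mv a b s) (z * ι (hopc q a b s)) := by
  have hd : ∀ c t : Fin n, dlt (n := n) (c : ℕ) t = if t = c then 1 else 0 := fun c t => by
    simp [dlt, Fin.ext_iff]
  simp only [hd] at hf
  by_cases h : Hop a b s
  · have hfm : ∀ t, f t = ((mv a b s).1 t : ℤ) := fun t => by
      have := mv_add h t
      rw [hf]
      zify at this
      linarith
    have hfm' : (fun t => (f t).toNat) = (mv a b s).1 := funext fun t => by rw [hfm]; simp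
    have hk : ket L ε f = Finsupp.single (mv a b s) 1 := by
      unfold ket
      rw [dif_pos ⟨fun t => by rw [hfm]; positivity, by rw [hfm']; exact (mv a b s).2⟩]
      congr 1
      exact Subtype.ext hfm'
    rw [hk, hopc, if_pos h, Finsupp.smul_single, smul_eq_mul, mul_one]
  · have hk : ket L ε f = 0 := by
      unfold ket
      rw [dif_neg]
      rintro ⟨h1, h2⟩
      apply h
      refine ⟨?_, fun hb => ?_⟩
      · have := h1 a
        rw [hf] at this
        simp only [hab, if_true, if_false] at this
        omega
      · have h3 := h2 b hb
        simp only [hf, hab.symm, if_true, if_false] at h3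
        omega
    rw [hk, hopc, if_neg h, smul_zero, map_zero, mul_zero, Finsupp.single_zero]

/-- The eigenvalue of `k_r`. -/
def kval (q : ℂ) {n : ℕ} {ε : Fin n → Bool} (r : Fin n) (s : Idx ε) : ℂ :=
  qc q ε (pr r : ℕ) ^ (-(s.1 (pr r) : ℤ)) * qc q ε (r : ℕ) ^ (s.1 r : ℤ)

lemma kval_ne_zero {q : ℂ} (hq0 : q ≠ 0) {n : ℕ} {ε : Fin n → Bool} (r : Fin n) (s : Idx ε) :
    kval q r s ≠ 0 := by
  have : ∀ p, qc q ε p ≠ 0 := fun p => by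
    unfold qc
    split_ifs <;> simp [hq0]
  exact mul_ne_zero (zpow_ne_zero _ (this _)) (zpow_ne_zero _ (this _))

lemma kA_single (q : ℂ) {L : Type} [Field L] (ι : ℂ →+* L) {n : ℕ} {ε : Fin n → Bool} (z : ℤ)
    (r : Fin n) (s : Idx ε) :
    kA q ι ε z r (Finsupp.single s 1) = Finsupp.single s (ι (kval q r s ^ z)) := by
  have h1 : av s.1 (((r : ℕ) + n - 1) % n) = s.1 (pr r) := av_coe s.1 (pr r)
  rw [kA, mkEnd_single, av_coe, h1, Finsupp.smul_single, smul_eq_mul, mul_one]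
  rfl

lemma eA_single (q : ℂ) {L : Type} [Field L] (ι : ℂ →+* L) {n : ℕ} {ε : Fin n → Bool} (x : L)
    (r : Fin n) (hr : pr r ≠ r) (s : Idx ε) :
    eA q ι ε x r (Finsupp.single s 1) = Finsupp.single (mv (pr r) r s)
      (x ^ (if (r : ℕ) = 0 then 1 else 0) * ι (hopc q (pr r) r s)) := by
  have h1 : av s.1 (((r : ℕ) + n - 1) % n) = s.1 (pr r) := av_coe s.1 (pr r)
  rw [eA, mkEnd_single, h1]
  exact smul_ket q ι hr s _ _ fun t => rfl

lemma fA_single (q : ℂ) {L : Type} [Field L] (ι : ℂ →+* L) {n : ℕ} {ε : Fin n → Bool} (x : L)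
    (r : Fin n) (hr : pr r ≠ r) (s : Idx ε) :
    fA q ι ε x r (Finsupp.single s 1) = Finsupp.single (mv r (pr r) s)
      (x ^ (if (r : ℕ) = 0 then (-1 : ℤ) else 0) * ι (hopc q r (pr r) s)) := by
  rw [fA, mkEnd_single, av_coe]
  exact smul_ket q ι hr.symm s _ _ fun t => by simp only [pr]; ring

lemma dE_eq (q : ℂ) {L : Type} [Field L] (ι : ℂ →+* L) {n : ℕ} {ε : Fin n → Bool} (x y : L)
    (r : Fin n) (hr : pr r ≠ r) :
    dE q ι ε x y r = op2
      (fun p => y ^ (if (r : ℕ) = 0 then 1 else 0) * ι (hopc q (pr r) r p.2))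
      (fun p => x ^ (if (r : ℕ) = 0 then 1 else 0) * ι (hopc q (pr r) r p.1) * ι (kval q r p.2))
      (mv (pr r) r) := by
  refine Finsupp.lhom_ext' fun p => LinearMap.ext_ring ?_
  simp only [LinearMap.comp_apply, Finsupp.lsingle_apply, dE, LinearMap.add_apply, opT,
    mkEnd_single, LinearMap.id_apply, eA_single q ι _ r hr, kA_single, tens_single, op2_single,
    one_mul, zpow_one]

lemma dF_eq (q : ℂ) {L : Type} [Field L] (ι : ℂ →+* L) {n : ℕ} {ε : Fin n → Bool} (x y : L)
    (r : Fin n) (hr : pr r ≠ r) :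
    dF q ι ε x y r = op2
      (fun p => ι (kval q r p.1 ^ (-1 : ℤ)) *
        (y ^ (if (r : ℕ) = 0 then (-1 : ℤ) else 0) * ι (hopc q r (pr r) p.2)))
      (fun p => x ^ (if (r : ℕ) = 0 then (-1 : ℤ) else 0) * ι (hopc q r (pr r) p.1))
      (mv r (pr r)) := by
  refine Finsupp.lhom_ext' fun p => LinearMap.ext_ring ?_
  simp only [LinearMap.comp_apply, Finsupp.lsingle_apply, dF, LinearMap.add_apply, opT,
    mkEnd_single, LinearMap.id_apply, fA_single q ι _ r hr, kA_single, tens_single, op2_single,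
    one_mul, mul_one]
  rw [add_comm]

lemma mem_WWlm_support {L : Type} [Field L] {n : ℕ} {ε : Fin n → Bool} {l m : ℕ} {u : WW L ε}
    (hu : u ∈ WWlm L ε l m) : ∀ p ∈ u.support, ∑ t, p.1.1 t = l ∧ ∑ t, p.2.1 t = m := by
  have h : WWlm L ε l m ≤
      Finsupp.supported L L {p : Idx ε × Idx ε | ∑ t, p.1.1 t = l ∧ ∑ t, p.2.1 t = m} := by
    refine Submodule.span_le.2 ?_
    rintro _ ⟨p, h1, h2, rfl⟩
    exact Finsupp.single_mem_supported L 1 ⟨h1, h2⟩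
  exact fun p hp => (Finsupp.mem_supported L u).1 (h hu) hp

lemma finite_labels {n : ℕ} (ε : Fin n → Bool) (l m : ℕ) :
    {p : Idx ε × Idx ε | ∑ t, p.1.1 t = l ∧ ∑ t, p.2.1 t = m}.Finite := by
  have h : ∀ l : ℕ, {s : Idx ε | ∑ t, s.1 t = l}.Finite := fun l => by
    refine Set.Finite.of_finite_image ((Set.finite_Iic fun _ : Fin n => l).subset ?_)
      (f := Subtype.val) Subtype.val_injective.injOn
    rintro _ ⟨s, rfl, rfl⟩ t
    exact Finset.single_le_sum (f := s.1) (fun _ _ => Nat.zero_le _) (Finset.mem_univ t)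
  exact ((h l).prod (h m)).subset fun p hp => hp

open Polynomial in
/-- Irreducibility over `F(y)`, for any field `F` containing `ℂ` and any nonzero `x ∈ F`. -/
lemma irred_generic (q : ℂ) (hq0 : q ≠ 0) (hq : ∀ k : ℕ, k ≠ 0 → q ^ k ≠ 1)
    {F : Type} [Field F] (ι : ℂ →+* F) (x : F) (hx : x ≠ 0) {n : ℕ} (hn : 2 ≤ n)
    {ε : Fin n → Bool} (hε : ∀ t : Fin n, ε t = true ↔ (t : ℕ) + 1 < n) (l m : ℕ)
    (U : Submodule (RatFunc F) (WW (RatFunc F) ε)) (hU : U ≤ WWlm (RatFunc F) ε l m)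
    (hE : ∀ r, ∀ v ∈ U, dE q (RatFunc.C.comp ι) ε (RatFunc.C x) RatFunc.X r v ∈ U)
    (hF : ∀ r, ∀ v ∈ U, dF q (RatFunc.C.comp ι) ε (RatFunc.C x) RatFunc.X r v ∈ U) :
    U = ⊥ ∨ U = WWlm (RatFunc F) ε l m := by
  by_cases hbot : U = ⊥
  · exact Or.inl hbot
  refine Or.inr (le_antisymm hU (Submodule.span_le.2 ?_))
  rintro _ ⟨p, hp1, hp2, rfl⟩
  have hpr : ∀ (i : ℕ) (h : i + 1 < n), pr (⟨i + 1, h⟩ : Fin n) = ⟨i, by omega⟩ := fun i h => by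
    apply Fin.ext
    have : i + 1 + n - 1 = i + n := by omega
    simp only [pr, this, Nat.add_mod_right]
    exact Nat.mod_eq_of_lt (by omega)
  have hpr0 : pr (⟨0, by omega⟩ : Fin n) = ⟨n - 1, by omega⟩ := by
    apply Fin.ext
    simp only [pr, zero_add]
    exact Nat.mod_eq_of_lt (by omega)
  have hne : ∀ (i : ℕ) (h : i + 1 < n), (⟨i, by omega⟩ : Fin n) ≠ ⟨i + 1, h⟩ := by simp
  have hne0 : (⟨n - 1, by omega⟩ : Fin n) ≠ ⟨0, by omega⟩ := by
    simp only [ne_eq, Fin.mk.injEq]; omega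
  have hc : ∀ (a b : Fin n) (s : Idx ε), ι (hopc q a b s) ≠ 0 ↔ Hop a b s := fun a b s => by
    rw [_root_.map_ne_zero, hopc_ne_zero hq0 hq]
  have hk : ∀ (r : Fin n) (s : Idx ε) (z : ℤ), ι (kval q r s ^ z) ≠ 0 := fun r s z =>
    (_root_.map_ne_zero ι).2 (zpow_ne_zero _ (kval_ne_zero hq0 r s))
  have hx' : (RatFunc.C x : RatFunc F) ≠ 0 := (_root_.map_ne_zero _).2 hx
  have hX : (RatFunc.X : RatFunc F) ≠ 0 := RatFunc.X_ne_zero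
  refine mem_of_redAt0 (finite_labels ε l m) (fun u hu => mem_WWlm_support (hU hu)) ?_ p
    ⟨hp1, hp2⟩
  rintro ⟨s, t⟩ ⟨hs, ht⟩
  refine limit_irred hn hε (redAt0_ne_bot hbot) (l := l) (m := m) ?_ ?_ ?_ ?_ ?_ s t hs ht
  · rintro _ ⟨u, rfl, hu⟩ p hp
    refine mem_WWlm_support (hU hu) p (Finsupp.mem_support_iff.2 fun h0 => ?_)
    rw [Finsupp.mapRange_apply] at h0
    have := (map_eq_zero_iff _ (IsFractionRing.injective F[X] (RatFunc F))).1 h0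
    rw [Finsupp.mem_support_iff, Finsupp.mapRange_apply, this, map_zero] at hp
    exact hp rfl
  · intro i h
    refine ⟨_, _, ?_, ?_, redAt0_op2
      (fun p => C (ι (hopc q ⟨i, by omega⟩ ⟨i + 1, h⟩ p.2)))
      (fun p => C (ι (hopc q ⟨i, by omega⟩ ⟨i + 1, h⟩ p.1) * ι (kval q ⟨i + 1, h⟩ p.2)))
      _ fun u hu => ?_⟩
    · intro p
      rw [coeff_C_zero, hc]
    · intro p
      have := hk ⟨i + 1, h⟩ p.2 1
      rw [zpow_one] at this
      rw [coeff_C_zero, mul_ne_zero_iff, hc]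
      exact and_iff_left this
    · have h1 := hE ⟨i + 1, h⟩ u hu
      rw [dE_eq _ _ _ _ _ (by rw [hpr]; exact hne i h), hpr] at h1
      simpa [RatFunc.algebraMap_C] using h1
  · intro i h
    refine ⟨_, _, ?_, ?_, redAt0_op2
      (fun p => C (ι (kval q ⟨i + 1, h⟩ p.1 ^ (-1 : ℤ)) *
        ι (hopc q ⟨i + 1, h⟩ ⟨i, by omega⟩ p.2)))
      (fun p => C (ι (hopc q ⟨i + 1, h⟩ ⟨i, by omega⟩ p.1)))
      _ fun u hu => ?_⟩
    · intro p
      rw [coeff_C_zero, mul_ne_zero_iff, hc]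
      exact and_iff_right (hk _ _ _)
    · intro p
      rw [coeff_C_zero, hc]
    · have h1 := hF ⟨i + 1, h⟩ u hu
      rw [dF_eq _ _ _ _ _ (by rw [hpr]; exact hne i h), hpr] at h1
      simpa [RatFunc.algebraMap_C] using h1
  · have key := redAt0_op2 (U := U)
      (fun p => X * C (ι (hopc q ⟨n - 1, by omega⟩ ⟨0, by omega⟩ p.2)))
      (fun p => C (x * ι (hopc q ⟨n - 1, by omega⟩ ⟨0, by omega⟩ p.1) *
        ι (kval q ⟨0, by omega⟩ p.2)))
      (mv ⟨n - 1, by omega⟩ ⟨0, by omega⟩) fun u hu => by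
        have h1 := hE ⟨0, by omega⟩ u hu
        rw [dE_eq _ _ _ _ _ (by rw [hpr0]; exact hne0), hpr0] at h1
        simpa [RatFunc.algebraMap_C, RatFunc.algebraMap_X, -Polynomial.X_mul_C] using h1
    simp only [coeff_X_mul_zero] at key
    refine ⟨_, fun p => ?_, key⟩
    have := hk ⟨0, by omega⟩ p.2 1
    rw [zpow_one] at this
    rw [coeff_C_zero, mul_ne_zero_iff, mul_ne_zero_iff, hc]
    exact ⟨fun h => h.1.2, fun h => ⟨⟨hx, h⟩, this⟩⟩
  · -- `Δ(f₀)` has a pole at `y = 0`, so `y Δ(f₀)` is specialized instead.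
    have key := redAt0_op2 (U := U)
      (fun p => C (ι (kval q ⟨0, by omega⟩ p.1 ^ (-1 : ℤ)) *
        ι (hopc q ⟨0, by omega⟩ ⟨n - 1, by omega⟩ p.2)))
      (fun p => X * C (x⁻¹ * ι (hopc q ⟨0, by omega⟩ ⟨n - 1, by omega⟩ p.1)))
      (mv ⟨0, by omega⟩ ⟨n - 1, by omega⟩) fun u hu => by
        have h1 := U.smul_mem RatFunc.X (hF ⟨0, by omega⟩ u hu)
        rw [dF_eq _ _ _ _ _ (by rw [hpr0]; exact hne0), hpr0] at h1
        convert h1 using 1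
        rw [← LinearMap.smul_apply]
        congr 1
        refine Finsupp.lhom_ext' fun p => LinearMap.ext_ring ?_
        simp only [LinearMap.comp_apply, Finsupp.lsingle_apply, LinearMap.smul_apply, op2_single,
          smul_add, Finsupp.smul_single, smul_eq_mul, one_mul, if_true, map_mul,
          RatFunc.algebraMap_C, RatFunc.algebraMap_X, RingHom.comp_apply, zpow_neg, zpow_one,
          map_inv₀]
        congr 2
        field_simp
    simp only [coeff_X_mul_zero] at key
    refine ⟨_, fun p => ?_, key⟩
    rw [coeff_C_zero, mul_ne_zero_iff, hc]
    exact and_iff_right (hk _ _ _)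

/-- irreducibility of `𝒲_l⊗𝒲_m` for `κ = n-1`, over `ℂ(q)(x,y)`. -/
theorem statement_14 (q : ℂ) (hq0 : q ≠ 0) (hq : ∀ k : ℕ, k ≠ 0 → q ^ k ≠ 1)
    (n : ℕ) [NeZero n] (hn : 2 ≤ n)
    (ε : Fin n → Bool) (hε : ε = fun t : Fin n => decide ((t : ℕ) < n - 1)) (l m : ℕ) :
    ∀ U : Submodule (RatFunc (RatFunc ℂ)) (WW (RatFunc (RatFunc ℂ)) ε),
      U ≤ WWlm (RatFunc (RatFunc ℂ)) ε l m →
      (∀ r : Fin n, ∀ v ∈ U,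
        dE q (RatFunc.C.comp RatFunc.C) ε (RatFunc.C RatFunc.X) RatFunc.X r v ∈ U ∧
        dF q (RatFunc.C.comp RatFunc.C) ε (RatFunc.C RatFunc.X) RatFunc.X r v ∈ U ∧
        dK q (RatFunc.C.comp RatFunc.C) ε 1 r v ∈ U ∧
        dK q (RatFunc.C.comp RatFunc.C) ε (-1) r v ∈ U) →
      U = ⊥ ∨ U = WWlm (RatFunc (RatFunc ℂ)) ε l m := by
  intro U hU hinv
  refine irred_generic q hq0 hq RatFunc.C RatFunc.X RatFunc.X_ne_zero hn (fun t => ?_) l m U hU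
    (fun r v hv => (hinv r v hv).1) (fun r v hv => (hinv r v hv).2.1)
  rw [hε, decide_eq_true_iff]
  omega

end TetraGQ
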